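/- Every finite subset of the set of Church integers has a strong storage operator: for every finite set F ⊆ {n̲ : n ∈ ℕ} there is a closed λ-term T such that for every n̲ ∈ F and every λ-term θₙ ≃β n̲, (T)θₙ f ≻ (f)n̲ (f a fresh variable). -/

import Mathlib

/- Pure untyped λ-calculus with de Bruijn indices. -/

inductive Lam : Type
  | var : ℕ → Lam
  | app : Lam → Lam → Lam
  | abs : Lam → Lam
  deriving DecidableEq

namespace Lam

/-- Renaming of free variables. -/
def rename (ρ : ℕ → ℕ) : Lam → Lam
  | var i => var (ρ i)
  | app u v => app (u.rename ρ) (v.rename ρ)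
  | abs u => abs (u.rename (fun i => match i with | 0 => 0 | j+1 => ρ j + 1))

/-- Lifting of a simultaneous substitution under a binder. -/
def liftSub (σ : ℕ → Lam) : ℕ → Lam
  | 0 => var 0
  | i+1 => (σ i).rename (· + 1)

/-- Simultaneous (capture-avoiding) substitution of the free variables. -/
def subst (σ : ℕ → Lam) : Lam → Lam
  | var i => σ i
  | app u v => app (u.subst σ) (v.subst σ)
  | abs u => abs (u.subst (liftSub σ))

/-- `u.subst0 v` is `u[v/x]` for the first variable. -/
def subst0 (u v : Lam) : Lam :=
  u.subst (fun i => match i with | 0 => v | j+1 => var j)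

/-- One step of β-reduction (anywhere in the term). -/
inductive Beta : Lam → Lam → Prop
  | beta (u v : Lam) : Beta (app (abs u) v) (u.subst0 v)
  | appL {u u'} (v) : Beta u u' → Beta (app u v) (app u' v)
  | appR (u) {v v'} : Beta v v' → Beta (app u v) (app u v')
  | abs {u u'} : Beta u u' → Beta (abs u) (abs u')

/-- β-equivalence `≃β`. -/
def BetaEq : Lam → Lam → Prop := Relation.EqvGen Beta

/-- A term is normal if it has no β-redex. -/
def Normal (t : Lam) : Prop := ∀ u, ¬ Beta t u

def IsAbs : Lam → Prop
  | abs _ => True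
  | _ => False

/-- One step of head reduction: reduction of the head redex. -/
inductive HeadStep : Lam → Lam → Prop
  | beta (u v) : HeadStep (app (abs u) v) (u.subst0 v)
  | appL {u u'} (v) : ¬ u.IsAbs → HeadStep u u' → HeadStep (app u v) (app u' v)
  | abs {u u'} : HeadStep u u' → HeadStep (abs u) (abs u')

/-- `HeadRedN n u v` : `u` head-reduces to `v` in exactly `n` steps (`u ≻ v` with `n(u,v) = n`). -/
inductive HeadRedN : ℕ → Lam → Lam → Prop
  | refl (u) : HeadRedN 0 u u
  | step {n u v w} : HeadStep u v → HeadRedN n v w → HeadRedN (n+1) u w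

/-- `u ≻ v` : `v` is obtained from `u` by some head reductions. -/
def HeadRed (u v : Lam) : Prop := ∃ n, HeadRedN n u v

/-- Head normal form. -/
def HeadNF (t : Lam) : Prop := ∀ u, ¬ HeadStep t u

def ClosedUnder : ℕ → Lam → Prop
  | k, var i => i < k
  | k, app u v => ClosedUnder k u ∧ ClosedUnder k v
  | k, abs u => ClosedUnder (k+1) u

/-- Closed λ-term. -/
def Closed (t : Lam) : Prop := ClosedUnder 0 t

/-- `(f)ⁿx` : `iterApp f n x = (f)(f)…(f)x`. -/
def iterApp (f : Lam) : ℕ → Lam → Lam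
  | 0, x => x
  | n+1, x => app f (iterApp f n x)

/-- The Church integer `n̲ = λxλf(f)ⁿx`. -/
def church (n : ℕ) : Lam := abs (abs (iterApp (var 0) n (var 1)))

/-- `(t)w₁…wₖ`. -/
def appList (t : Lam) (ws : List Lam) : Lam := ws.foldl app t

/-- `T` is a storage operator for the closed normal term `t` :
there is `τ ≃β t` such that for every `θ ≃β t` there is a substitution `σ`
(not touching the fresh variable `f`, represented by the de Bruijn index `0`)
with `(T)θf ≻ (f)σ(τ)`. -/
def IsStorageFor (T t : Lam) : Prop :=
  Closed T ∧ ∃ τ, BetaEq τ t ∧ ∀ θ, BetaEq θ t →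
    ∃ σ : ℕ → Lam, σ 0 = var 0 ∧
      HeadRed (app (app T θ) (var 0)) (app (var 0) (τ.subst σ))

end Lam

namespace Lam

theorem rtLift {r s : Lam → Lam → Prop} {a b : Lam} (f : Lam → Lam)
    (hf : ∀ x y, r x y → s (f x) (f y)) (h : Relation.ReflTransGen r a b) :
    Relation.ReflTransGen s (f a) (f b) := by
  induction h with
  | refl => exact .refl
  | tail _ h ih => exact ih.tail (hf _ _ h)

def upr (ρ : ℕ → ℕ) : ℕ → ℕ
  | 0 => 0
  | j+1 => ρ j + 1

def single (v : Lam) : ℕ → Lam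
  | 0 => v
  | j+1 => var j

theorem rename_abs (ρ : ℕ → ℕ) (u : Lam) : (abs u).rename ρ = abs (u.rename (upr ρ)) := by
  have : upr ρ = (fun i => match i with | 0 => 0 | j+1 => ρ j + 1) := by
    funext i; cases i <;> rfl
  rw [this]; rfl

theorem subst0_eq (u v : Lam) : u.subst0 v = u.subst (single v) := by
  have : single v = (fun i => match i with | 0 => v | j+1 => var j) := by
    funext i; cases i <;> rfl
  rw [this]; rfl

theorem rename_eq_subst (t : Lam) : ∀ ρ : ℕ → ℕ, t.rename ρ = t.subst (fun i => var (ρ i)) := by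
  induction t with
  | var i => intro ρ; rfl
  | app u v hu hv => intro ρ; simp only [rename, subst, hu, hv]
  | abs u hu =>
    intro ρ
    rw [rename_abs, hu]
    show abs _ = abs _
    congr 2
    funext i; cases i <;> rfl

theorem subst_var (t : Lam) : t.subst var = t := by
  induction t with
  | var i => rfl
  | app u v hu hv => simp only [subst, hu, hv]
  | abs u hu =>
    have : liftSub var = var := by funext i; cases i <;> rfl
    simp only [subst, this, hu]

theorem subst_rename (t : Lam) : ∀ (ρ : ℕ → ℕ) (σ : ℕ → Lam),
    (t.rename ρ).subst σ = t.subst (fun i => σ (ρ i)) := by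
  induction t with
  | var i => intro ρ σ; rfl
  | app u v hu hv => intro ρ σ; simp only [rename, subst, hu, hv]
  | abs u hu =>
    intro ρ σ
    rw [rename_abs]
    simp only [subst, hu]
    congr 2
    funext i; cases i <;> rfl

theorem rename_rename (t : Lam) (ρ τ : ℕ → ℕ) :
    (t.rename ρ).rename τ = t.rename (fun i => τ (ρ i)) := by
  rw [rename_eq_subst _ τ, subst_rename, ← rename_eq_subst t (fun i => τ (ρ i))]

theorem rename_subst (t : Lam) : ∀ (σ : ℕ → Lam) (ρ : ℕ → ℕ),
    (t.subst σ).rename ρ = t.subst (fun i => (σ i).rename ρ) := by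
  induction t with
  | var i => intro σ ρ; rfl
  | app u v hu hv => intro σ ρ; simp only [rename, subst, hu, hv]
  | abs u hu =>
    intro σ ρ
    simp only [subst]
    rw [rename_abs, hu]
    congr 2
    funext i
    cases i with
    | zero => rfl
    | succ j => simp only [liftSub, rename_rename]; rfl

theorem subst_subst (t : Lam) : ∀ (σ τ : ℕ → Lam),
    (t.subst σ).subst τ = t.subst (fun i => (σ i).subst τ) := by
  induction t with
  | var i => intro σ ρ; rfl
  | app u v hu hv => intro σ ρ; simp only [subst, hu, hv]
  | abs u hu =>
    intro σ τ
    simp only [subst, hu]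
    congr 2
    funext i
    cases i with
    | zero => rfl
    | succ j => simp only [liftSub, subst_rename, rename_subst]

theorem shift_subst (t : Lam) (σ : ℕ → Lam) :
    (t.rename (· + 1)).subst (liftSub σ) = (t.subst σ).rename (· + 1) := by
  rw [subst_rename, rename_subst]; rfl

theorem shift_single (t v : Lam) : (t.rename (· + 1)).subst (single v) = t := by
  rw [subst_rename]; exact subst_var t

theorem subst0_subst (u v : Lam) (σ : ℕ → Lam) :
    (u.subst0 v).subst σ = (u.subst (liftSub σ)).subst0 (v.subst σ) := by
  rw [subst0_eq, subst0_eq, subst_subst, subst_subst]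
  congr 1
  funext i
  cases i with
  | zero => rfl
  | succ j => simp only [liftSub, shift_single]; rfl

/-! beta closure -/

abbrev BS : Lam → Lam → Prop := Relation.ReflTransGen Beta

theorem Beta.sub {u v : Lam} (h : Beta u v) : ∀ σ, Beta (u.subst σ) (v.subst σ) := by
  induction h with
  | beta u v => intro σ; rw [subst0_subst]; exact Beta.beta _ _
  | appL v _ ih => intro σ; exact Beta.appL _ (ih σ)
  | appR u _ ih => intro σ; exact Beta.appR _ (ih σ)
  | abs _ ih => intro σ; exact Beta.abs (ih _)

theorem BS.sub {u v : Lam} (h : BS u v) (σ) : BS (u.subst σ) (v.subst σ) :=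
  rtLift (fun t => t.subst σ) (fun _ _ h => h.sub σ) h

theorem BS.app {u u' v v' : Lam} (h : BS u u') (h' : BS v v') : BS (app u v) (app u' v') :=
  (rtLift (fun t => Lam.app t v) (fun _ _ h => Beta.appL v h) h).trans
    (rtLift (fun t => Lam.app u' t) (fun _ _ h => Beta.appR u' h) h')

theorem BS.abs {u u' : Lam} (h : BS u u') : BS (abs u) (abs u') :=
  rtLift Lam.abs (fun _ _ h => Beta.abs h) h

theorem BS.subR (t : Lam) : ∀ {σ τ : ℕ → Lam}, (∀ i, BS (σ i) (τ i)) →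
    BS (t.subst σ) (t.subst τ) := by
  induction t with
  | var i => intro σ τ h; exact h i
  | app u v hu hv => intro σ τ h; exact BS.app (hu h) (hv h)
  | abs u hu =>
    intro σ τ h
    refine BS.abs (hu ?_)
    intro i
    cases i with
    | zero => exact .refl
    | succ j =>
      simp only [liftSub, rename_eq_subst]
      exact (h j).sub _

/-! weak head reduction -/

inductive WH : Lam → Lam → Prop
  | beta (u v) : WH (app (abs u) v) (u.subst0 v)
  | appL {u u'} (v) : WH u u' → WH (app u v) (app u' v)

abbrev WS : Lam → Lam → Prop := Relation.ReflTransGen WH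

theorem WH.sub {u v : Lam} (h : WH u v) (σ) : WH (u.subst σ) (v.subst σ) := by
  induction h with
  | beta u v => rw [subst0_subst]; exact WH.beta _ _
  | appL v _ ih => exact WH.appL _ ih

theorem WS.sub {u v : Lam} (h : WS u v) (σ) : WS (u.subst σ) (v.subst σ) :=
  rtLift (fun t => t.subst σ) (fun _ _ h => h.sub σ) h

theorem WS.app {u u' : Lam} (h : WS u u') (v : Lam) : WS (app u v) (app u' v) :=
  rtLift (fun t => Lam.app t v) (fun _ _ h => WH.appL v h) h

theorem WH.toBeta {u v : Lam} (h : WH u v) : Beta u v := by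
  induction h with
  | beta u v => exact .beta _ _
  | appL v _ ih => exact .appL _ ih

theorem WH.toHead {u v : Lam} (h : WH u v) : HeadStep u v := by
  induction h with
  | beta u v => exact .beta _ _
  | appL v h ih =>
    refine .appL _ ?_ ih
    cases h <;> exact fun h => h

theorem WS.toHead {u v : Lam} (h : WS u v) : HeadRed u v := by
  induction h using Relation.ReflTransGen.head_induction_on with
  | refl => exact ⟨0, .refl _⟩
  | head h _ ih =>
    obtain ⟨n, hn⟩ := ih
    exact ⟨n+1, .step h.toHead hn⟩

/-! forward invariance -/

theorem WH.diamond1 {t t1 t' : Lam} (h : WH t t1) : Beta t t' →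
    ∃ t1', BS t1 t1' ∧ (t' = t1' ∨ WH t' t1') := by
  intro hb
  induction h generalizing t' with
  | beta u v =>
    cases hb with
    | beta => exact ⟨_, .refl, .inl rfl⟩
    | appL _ h =>
      cases h with
      | abs h =>
        refine ⟨_, ?_, .inr (.beta _ _)⟩
        rw [subst0_eq, subst0_eq]
        exact .single (h.sub _)
    | appR _ h =>
      refine ⟨_, ?_, .inr (.beta _ _)⟩
      rw [subst0_eq, subst0_eq]
      refine BS.subR _ ?_
      intro i
      cases i with
      | zero => exact .single h
      | succ j => exact .refl
  | appL v h ih =>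
    cases hb with
    | beta => cases h
    | appL _ hb =>
      obtain ⟨w, h1, h2⟩ := ih hb
      refine ⟨Lam.app w v, BS.app h1 .refl, ?_⟩
      rcases h2 with h2 | h2
      · left; rw [h2]
      · right; exact .appL _ h2
    | appR _ hb =>
      exact ⟨_, BS.app .refl (.single hb), .inr (.appL _ h)⟩

theorem WH.diamond {t t' : Lam} (hb : BS t t') : ∀ {t1}, WH t t1 →
    ∃ t1', BS t1 t1' ∧ (t' = t1' ∨ WH t' t1') := by
  induction hb using Relation.ReflTransGen.head_induction_on with
  | refl => intro t1 h; exact ⟨t1, .refl, .inr h⟩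
  | head hb hbs ih =>
    intro t1 h
    obtain ⟨w, h1, h2⟩ := h.diamond1 hb
    rcases h2 with h2 | h2
    · subst h2; exact ⟨_, h1.trans hbs, .inl rfl⟩
    · obtain ⟨w', h3, h4⟩ := ih h2
      exact ⟨w', h1.trans h3, h4⟩

theorem WS.forward {t : Lam} {g : ℕ} (h : WS t (var g)) : ∀ {t'}, BS t t' → WS t' (var g) := by
  induction h using Relation.ReflTransGen.head_induction_on with
  | refl =>
    intro t' hb
    rcases Relation.ReflTransGen.cases_head hb with h | ⟨c, h, _⟩
    · rw [h]
    · cases h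
  | head h hs ih =>
    intro t' hb
    obtain ⟨w, h1, h2⟩ := WH.diamond hb h
    have := ih h1
    rcases h2 with h2 | h2
    · rw [h2]; exact this
    · exact .head h2 this

/-! standardization -/

inductive St : Lam → Lam → Prop
  | var {m i} : WS m (var i) → St m (var i)
  | app {m a b a' b'} : WS m (app a b) → St a a' → St b b' → St m (app a' b')
  | abs {m a a'} : WS m (abs a) → St a a' → St m (abs a')

theorem St.rfl' (t : Lam) : St t t := by
  induction t with
  | var i => exact .var .refl
  | app u v hu hv => exact .app .refl hu hv
  | abs u hu => exact .abs .refl hu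

theorem St.head {l m n : Lam} (h : WS l m) (h' : St m n) : St l n := by
  cases h' with
  | var a => exact .var (h.trans a)
  | app a b c => exact .app (h.trans a) b c
  | abs a b => exact .abs (h.trans a) b

theorem St.ren {m n : Lam} (h : St m n) : ∀ ρ : ℕ → ℕ, St (m.rename ρ) (n.rename ρ) := by
  induction h with
  | var a =>
    intro ρ
    have := WS.sub a (fun i => Lam.var (ρ i))
    rw [← rename_eq_subst, ← rename_eq_subst] at this
    exact .var this
  | app a _ _ ih1 ih2 =>
    intro ρ
    have := WS.sub a (fun i => Lam.var (ρ i))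
    rw [← rename_eq_subst, ← rename_eq_subst] at this
    exact .app this (ih1 ρ) (ih2 ρ)
  | abs a _ ih =>
    intro ρ
    have := WS.sub a (fun i => Lam.var (ρ i))
    rw [← rename_eq_subst, ← rename_eq_subst, rename_abs] at this
    rw [rename_abs]
    exact .abs this (ih _)

theorem St.sub {m n : Lam} (h : St m n) : ∀ {σ τ : ℕ → Lam}, (∀ i, St (σ i) (τ i)) →
    St (m.subst σ) (n.subst τ) := by
  induction h with
  | var a => intro σ τ hs; exact St.head (WS.sub a σ) (hs _)
  | app a _ _ ih1 ih2 => intro σ τ hs; exact .app (WS.sub a σ) (ih1 hs) (ih2 hs)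
  | abs a _ ih =>
    intro σ τ hs
    refine .abs (WS.sub a σ) (ih ?_)
    intro i
    cases i with
    | zero => exact St.rfl' _
    | succ j => exact (hs j).ren _

theorem St.beta {m n : Lam} (hb : Beta m n) : ∀ {l}, St l m → St l n := by
  induction hb with
  | beta u v =>
    intro l h
    cases h with
    | app a b c =>
      cases b with
      | abs d e =>
        refine St.head (a.trans ((WS.app d _).trans (.single (.beta _ _)))) ?_
        rw [subst0_eq, subst0_eq]
        refine e.sub ?_
        intro i
        cases i with
        | zero => exact c
        | succ j => exact St.rfl' _
  | appL v _ ih => intro l h; cases h with | app a b c => exact .app a (ih b) c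
  | appR v _ ih => intro l h; cases h with | app a b c => exact .app a b (ih c)
  | abs _ ih => intro l h; cases h with | abs a b => exact .abs a (ih b)

theorem BS.st {m n : Lam} (h : BS m n) : St m n := by
  induction h with
  | refl => exact St.rfl' _
  | tail _ h ih => exact St.beta h ih

theorem BS.wsVar {t : Lam} {g : ℕ} (h : BS t (var g)) : WS t (var g) := by
  cases BS.st h with
  | var a => exact a

theorem WS.toBS {u v : Lam} (h : WS u v) : BS u v :=
  rtLift (r := WH) (s := Beta) (fun t => t) (fun _ _ h => WH.toBeta h) h

theorem BetaEq.wsVar_iff {t u : Lam} (h : BetaEq t u) (g : ℕ) :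
    WS t (var g) ↔ WS u (var g) := by
  induction h with
  | rel x y h =>
    exact ⟨fun hx => WS.forward hx (.single h), fun hy => BS.wsVar (.head h (WS.toBS hy))⟩
  | refl => rfl
  | symm _ _ _ ih => exact ih.symm
  | trans _ _ _ _ _ ih1 ih2 => exact ih1.trans ih2

/-! BetaEq congruence -/

theorem BetaEq.sub {u v : Lam} (h : BetaEq u v) (σ) : BetaEq (u.subst σ) (v.subst σ) := by
  induction h with
  | rel x y h => exact .rel _ _ (h.sub σ)
  | refl => exact .refl _
  | symm _ _ _ ih => exact .symm _ _ ih
  | trans _ _ _ _ _ ih1 ih2 => exact .trans _ _ _ ih1 ih2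

theorem BetaEq.appC {u v : Lam} (h : BetaEq u v) (w) : BetaEq (app u w) (app v w) := by
  induction h with
  | rel x y h => exact .rel _ _ (.appL _ h)
  | refl => exact .refl _
  | symm _ _ _ ih => exact .symm _ _ ih
  | trans _ _ _ _ _ ih1 ih2 => exact .trans _ _ _ ih1 ih2

/-! closed terms -/

theorem ClosedUnder.sub {t : Lam} : ∀ {k} {σ : ℕ → Lam}, ClosedUnder k t →
    (∀ i < k, σ i = var i) → t.subst σ = t := by
  induction t with
  | var i => intro k σ h hs; exact hs i h
  | app u v hu hv => intro k σ h hs; simp only [subst, hu h.1 hs, hv h.2 hs]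
  | abs u hu =>
    intro k σ h hs
    simp only [subst]
    rw [hu (k := k+1) h]
    intro i hi
    cases i with
    | zero => rfl
    | succ j => simp only [liftSub, hs j (by omega)]; rfl

theorem Closed.sub {t : Lam} (h : Closed t) (σ) : t.subst σ = t :=
  ClosedUnder.sub (k := 0) h (by intro i hi; omega)

theorem Closed.ren {t : Lam} (h : Closed t) (ρ) : t.rename ρ = t := by
  rw [rename_eq_subst]; exact h.sub _

theorem ClosedUnder.mono {t : Lam} : ∀ {k l}, ClosedUnder k t → k ≤ l → ClosedUnder l t := by
  induction t with
  | var i => intro k l h hl; exact lt_of_lt_of_le h hl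
  | app u v hu hv => intro k l h hl; exact ⟨hu h.1 hl, hv h.2 hl⟩
  | abs u hu => intro k l h hl; exact hu (k := k+1) (l := l+1) h (by omega)

theorem church_closed (n : ℕ) : Closed (church n) := by
  show ClosedUnder 2 (iterApp (var 0) n (var 1))
  induction n with
  | zero => show 1 < 2; omega
  | succ n ih => exact ⟨by show 0 < 2; omega, ih⟩

theorem iterApp_subst (f x : Lam) (σ) (n : ℕ) :
    (iterApp f n x).subst σ = iterApp (f.subst σ) n (x.subst σ) := by
  induction n with
  | zero => rfl
  | succ n ih => simp only [iterApp, subst, ih]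

/-! the operator -/

def mkL : List Lam → Lam
  | [] => abs (var 0)
  | a :: l => abs (app (app (var 0) (a.rename (· + 1))) ((mkL l).rename (· + 1)))

theorem mkL_subst (l : List Lam) (σ) : (mkL l).subst σ = mkL (l.map (fun t => t.subst σ)) := by
  induction l with
  | nil => rfl
  | cons a l ih =>
    simp only [mkL, subst, List.map, shift_subst, ih]
    rfl

theorem mkL_closed (l : List Lam) (h : ∀ a ∈ l, Closed a) : Closed (mkL l) := by
  induction l with
  | nil => show 0 < 1; omega
  | cons a l ih =>
    have h1 : Closed a := h a (by simp)
    have h2 : Closed (mkL l) := ih (fun b hb => h b (by simp [hb]))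
    simp only [mkL, h1.ren, h2.ren]
    exact ⟨⟨by show 0 < 1; omega, ClosedUnder.mono h1 (by omega)⟩, ClosedUnder.mono h2 (by omega)⟩

def opX : Lam := abs (app (var 0) (abs (abs (var 1))))
def opB : Lam := abs (abs (app (var 0) (abs (var 2))))

theorem opX_closed : Closed opX := by
  simp [opX, Closed, ClosedUnder]
theorem opB_closed : Closed opB := by
  simp [opB, Closed, ClosedUnder]

theorem WH.beta' {u v w : Lam} (h : u.subst (single v) = w) : WH (Lam.app (Lam.abs u) v) w := by
  rw [← h, ← subst0_eq]; exact .beta _ _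

theorem mkL_app (a : Lam) (l : List Lam) (z : Lam) :
    WS (app (mkL (a :: l)) z) (app (app z a) (mkL l)) := by
  refine .single (WH.beta' ?_)
  simp only [subst, shift_single]
  rfl

theorem opX_app (a : Lam) (l : List Lam) : WS (app opX (mkL (a :: l))) a := by
  refine .head (WH.beta' (w := app (mkL (a :: l)) (abs (abs (var 1)))) rfl) ?_
  refine (mkL_app _ _ _).trans ?_
  refine .head (.appL _ (WH.beta' (w := abs (a.rename (· + 1))) rfl)) ?_
  exact .single (WH.beta' (shift_single _ _))

theorem opB_app (u a : Lam) (l : List Lam) :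
    WS (app (app opB u) (mkL (a :: l))) (app u (mkL l)) := by
  refine .head (.appL _ (WH.beta' (w := abs (app (var 0)
    (abs ((u.rename (· + 1)).rename (· + 1))))) rfl)) ?_
  refine .head (WH.beta' (w := app (mkL (a :: l)) (abs (u.rename (· + 1)))) ?_) ?_
  · simp only [subst, shift_subst, shift_single]; rfl
  refine (mkL_app _ _ _).trans ?_
  exact .single (.appL _ (WH.beta' (shift_single _ _)))

theorem iter_app (n : ℕ) : ∀ (l : List Lam) (a : Lam), l[n]? = some a →
    WS (app (iterApp opB n opX) (mkL l)) a := by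
  induction n with
  | zero =>
    intro l a h
    cases l with
    | nil => simp at h
    | cons b l =>
      simp at h; subst h; exact opX_app _ _
  | succ n ih =>
    intro l a h
    cases l with
    | nil => simp at h
    | cons b l =>
      simp at h
      exact (opB_app _ _ _).trans (ih l a h)

theorem church_app (n : ℕ) (l : List Lam) (a : Lam) (h : l[n]? = some a) :
    WS (app (app (app (church n) opX) opB) (mkL l)) a := by
  refine .head (.appL _ (.appL _ (WH.beta' (w := abs (iterApp (var 0) n opX)) ?_))) ?_
  · simp only [subst, iterApp_subst]
    rfl
  refine .head (.appL _ (WH.beta' (w := iterApp opB n opX) ?_)) (iter_app n l a h)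
  simp only [iterApp_subst, opX_closed.sub]
  rfl

def opG (k : ℕ) : Lam := abs (app (var 0) (church k))

theorem opG_closed (k : ℕ) : Closed (opG k) :=
  ⟨by show 0 < 1; omega, ClosedUnder.mono (church_closed k) (by omega)⟩

def opList (M : ℕ) : List Lam := (List.range M).map opG

def opT (M : ℕ) : Lam := abs (app (app (app (var 0) opX) opB) (mkL (opList M)))

theorem opL_closed (M : ℕ) : Closed (mkL (opList M)) := by
  apply mkL_closed
  intro a ha
  simp only [opList, List.mem_map] at ha
  obtain ⟨k, _, rfl⟩ := ha
  exact opG_closed k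

theorem opT_closed (M : ℕ) : Closed (opT M) :=
  ⟨⟨⟨by show 0 < 1; omega, ClosedUnder.mono opX_closed (by omega)⟩,
    ClosedUnder.mono opB_closed (by omega)⟩, ClosedUnder.mono (opL_closed M) (by omega)⟩

def opS (M : ℕ) : ℕ → Lam := fun i => if i < M then opG i else var (i - M)

theorem main_ws (M n : ℕ) (hn : n < M) (θ : Lam) (h : BetaEq θ (church n)) :
    WS (app (app (app θ opX) opB) (mkL (opList M))) (opG n) := by
  have h1 : BetaEq (θ.rename (· + M)) (church n) := by
    have := BetaEq.sub h (fun i => var (i + M))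
    rwa [(church_closed n).sub, ← rename_eq_subst θ (· + M)] at this
  have h2 := ((h1.appC opX).appC opB).appC (mkL ((List.range M).map var))
  have h3 := (BetaEq.wsVar_iff h2 n).2 (church_app n _ _ (by simp [hn]))
  have h4 := WS.sub h3 (opS M)
  simp only [subst, opX_closed.sub, opB_closed.sub, mkL_subst, subst_rename, List.map_map] at h4
  have e1 : (fun i => opS M (i + M)) = var := by
    funext i; simp [opS]
  have e2 : (List.range M).map ((fun t => t.subst (opS M)) ∘ var) = opList M := by
    apply List.map_congr_left
    intro k hk
    simp at hk
    simp [subst, opS, hk]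
  rw [e1, e2, subst_var] at h4
  simpa [opS, hn] using h4

theorem main_final (M n : ℕ) (hn : n < M) (θ : Lam) (h : BetaEq θ (church n)) :
    WS (app (app (opT M) θ) (var 0)) (app (var 0) (church n)) := by
  refine .head (.appL _ (WH.beta' (w := app (app (app θ opX) opB) (mkL (opList M))) ?_)) ?_
  · simp only [subst, opX_closed.sub, opB_closed.sub, (opL_closed M).sub]; rfl
  refine (WS.app (main_ws M n hn θ h) _).trans (.single (WH.beta' ?_))
  simp only [subst, (church_closed n).sub]; rfl

end Lam

open Lam in
/-- Every finite subset of the set of Church integers has a strong storage operator. -/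
theorem stmt5 (F : Finset ℕ) :
    ∃ T : Lam, Closed T ∧ ∀ n ∈ F, ∀ θ : Lam, BetaEq θ (church n) →
      HeadRed (app (app T θ) (var 0)) (app (var 0) (church n)) := by
  refine ⟨opT (F.sup id + 1), opT_closed _, ?_⟩
  intro n hn θ h
  have : n ≤ F.sup id := Finset.le_sup (f := id) hn
  exact WS.toHead (main_final _ n (by omega) θ h)
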